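/- arXiv:1607.00298 — 5 statements merged into one kernel-verified Lean document; each statement's English description precedes it below -/
import Mathlib

section
/- For all integers m ≥ 2 and l ≥ 1, if the symmetrization of the CLEX graph C(m,l) is connected with diameter D, then the symmetrization of C(m,l+1) is connected and has diameter at most 2·D + 1. -/
/-!
Write a vertex of `C(m,l+1)` as `(x, i)` with `x` a vertex of `C(m,l)` and `i` the label of
the copy. Given `(x, i)` and `(y, j)`, let `x'` be `y` with its last coordinate replaced by `j`.
Copy `i` of `C(m,l)` contains a walk of length at most `D` from `(x, i)` to `(x', i)`, and
a single level-`(l+1)` edge leads from `(x', i)` to `(y, j)`, unless these coincide. Hence any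
two vertices are within distance `D + 1 ≤ 2 * D + 1`.
-/

/-- The level-`t` (0-based; level `t+1` in the paper's 1-based numbering) directed
edge relation of the CLEX graph `C(m,l)` on vertex set `Fin l → Fin m`.
Level-1 (`t = 0`) edges join vertices differing exactly in the first coordinate;
for `t ≥ 1`, a level-`(t+1)` edge goes from `u` to `w` where `w t = u (t-1)`,
`w (t-1)` is arbitrary, and all other coordinates agree. -/
def clexEdge (m l : ℕ) (t : Fin l) (u w : Fin l → Fin m) : Prop :=
  if (t : ℕ) = 0 then
    u t ≠ w t ∧ ∀ k : Fin l, k ≠ t → u k = w k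
  else
    w t = u ⟨(t : ℕ) - 1, lt_of_le_of_lt (Nat.sub_le _ _) t.isLt⟩ ∧
      ∀ k : Fin l, (k : ℕ) ≠ (t : ℕ) - 1 → k ≠ t → w k = u k

/-- The symmetrization of the CLEX graph `C(m,l)`: the undirected simple graph in
which `u ≠ w` are adjacent iff some level-`t` edge joins them in either direction. -/
def clexSym (m l : ℕ) : SimpleGraph (Fin l → Fin m) :=
  SimpleGraph.fromRel (fun u w => ∃ t : Fin l, clexEdge m l t u w)

/-- Edges of `C(m,l)` remain edges of the same level inside the copy of `C(m,l)` labelled `i`. -/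
lemma clexEdge_snoc {m l : ℕ} (i : Fin m) {t : Fin l} {u w : Fin l → Fin m}
    (h : clexEdge m l t u w) :
    clexEdge m (l + 1) t.castSucc (Fin.snoc (α := fun _ => Fin m) u i)
      (Fin.snoc (α := fun _ => Fin m) w i) := by
  unfold clexEdge at h ⊢
  by_cases ht : (t : ℕ) = 0
  · simp only [Fin.val_castSucc, ht, if_true, Fin.snoc_castSucc] at h ⊢
    refine ⟨h.1, fun k => Fin.lastCases (by simp) (fun k hk => ?_) k⟩
    simpa using h.2 k (fun e => hk (by rw [e]))
  · simp only [Fin.val_castSucc, ht, if_false, Fin.snoc_castSucc] at h ⊢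
    refine ⟨?_, fun k => Fin.lastCases (by simp) (fun k hk hk' => ?_) k⟩
    · rw [h.1]
      exact (Fin.snoc_castSucc (α := fun _ => Fin m) i u ⟨(t : ℕ) - 1, by omega⟩).symm
    · simpa using h.2 k (by simpa using hk) (fun e => hk' (by rw [e]))

/-- The embedding of `C(m,l)` as the copy labelled `i` in `C(m,l+1)`. -/
def clexCopy (m l : ℕ) (i : Fin m) : clexSym m l →g clexSym m (l + 1) where
  toFun u := Fin.snoc (α := fun _ => Fin m) u i
  map_rel' := by
    intro u w h
    simp only [clexSym, SimpleGraph.fromRel_adj] at h ⊢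
    refine ⟨fun e => h.1 (Fin.snoc_left_injective (α := fun _ => Fin m) i e), ?_⟩
    rcases h.2 with ⟨t, ht⟩ | ⟨t, ht⟩
    · exact Or.inl ⟨_, clexEdge_snoc i ht⟩
    · exact Or.inr ⟨_, clexEdge_snoc i ht⟩

/-- The level-`(l+2)` edge of `C(m,l+2)` from `(z, j, i)` to `(z, k, j)`,
where `y = (z, k)`. -/
lemma clexEdge_last {m l : ℕ} (y : Fin (l + 1) → Fin m) (i j : Fin m) :
    clexEdge m (l + 1 + 1) (Fin.last (l + 1))
      (Fin.snoc (α := fun _ => Fin m) (Function.update y (Fin.last l) j) i)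
      (Fin.snoc (α := fun _ => Fin m) y j) := by
  unfold clexEdge
  rw [if_neg (by simp)]
  refine ⟨?_, fun k => Fin.lastCases (by simp) (fun k hk _ => ?_) k⟩
  · have := Fin.snoc_castSucc (α := fun _ => Fin m) i (Function.update y (Fin.last l) j)
      (Fin.last l)
    rw [Function.update_self] at this
    rw [Fin.snoc_last]
    exact this.symm
  · have hne : k ≠ Fin.last l := by
      rintro rfl
      simp at hk
    simp [Function.update_of_ne hne]

/-- Any two vertices are joined by a walk that stays in one copy of `C(m,l)` until its last step. -/
lemma clexSym_exists_walk {m l D : ℕ} (hl : 1 ≤ l)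
    (hconn : (clexSym m l).Connected) (hD : (clexSym m l).diam = D)
    (u w : Fin (l + 1) → Fin m) :
    ∃ p : (clexSym m (l + 1)).Walk u w, p.length ≤ D + 1 := by
  obtain ⟨l, rfl⟩ : ∃ n, l = n + 1 := ⟨l - 1, by omega⟩
  obtain ⟨x, i, rfl⟩ : ∃ x i, u = Fin.snoc (α := fun _ => Fin m) x i :=
    ⟨_, _, (Fin.snoc_init_self u).symm⟩
  obtain ⟨y, j, rfl⟩ : ∃ y j, w = Fin.snoc (α := fun _ => Fin m) y j :=
    ⟨_, _, (Fin.snoc_init_self w).symm⟩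
  obtain ⟨p, hp⟩ := hconn.exists_walk_length_eq_dist x (Function.update y (Fin.last l) j)
  have := hconn.nonempty
  have hle : p.length ≤ D := by
    rw [hp, ← hD]
    exact SimpleGraph.dist_le_diam (SimpleGraph.connected_iff_ediam_ne_top.mp hconn)
  obtain ⟨q, hq⟩ : ∃ q : (clexSym m (l + 1 + 1)).Walk (Fin.snoc (α := fun _ => Fin m) x i)
      (Fin.snoc (α := fun _ => Fin m) (Function.update y (Fin.last l) j) i), q.length ≤ D :=
    ⟨p.map (clexCopy m (l + 1) i), (SimpleGraph.Walk.length_map _ p).trans_le hle⟩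
  have hedge := clexEdge_last y i j
  -- The level-`(l+2)` edge may be a loop, which `clexSym` discards; the last step is then empty.
  by_cases e : Fin.snoc (α := fun _ => Fin m) (Function.update y (Fin.last l) j) i
      = Fin.snoc (α := fun _ => Fin m) y j
  · rw [← e]
    exact ⟨q, by omega⟩
  · have hadj : (clexSym m (l + 1 + 1)).Adj
        (Fin.snoc (α := fun _ => Fin m) (Function.update y (Fin.last l) j) i)
        (Fin.snoc (α := fun _ => Fin m) y j) := (SimpleGraph.fromRel_adj
      (fun u w => ∃ t : Fin (l + 1 + 1), clexEdge m (l + 1 + 1) t u w) _ _).mpr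
      ⟨e, Or.inl ⟨_, hedge⟩⟩
    exact ⟨q.concat hadj, by rw [SimpleGraph.Walk.length_concat]; omega⟩

/-- If the symmetrization of `C(m,l)` is connected with diameter `D`, then the
symmetrization of `C(m,l+1)` is connected with diameter at most `2·D + 1`. -/
theorem clexSym_succ_connected_diam_le (m l D : ℕ) (hm : 2 ≤ m) (hl : 1 ≤ l)
    (hconn : (clexSym m l).Connected) (hD : (clexSym m l).diam = D) :
    (clexSym m (l + 1)).Connected ∧ (clexSym m (l + 1)).diam ≤ 2 * D + 1 := by
  have key := clexSym_exists_walk hl hconn hD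
  have : Nonempty (Fin (l + 1) → Fin m) := ⟨fun _ => ⟨0, by omega⟩⟩
  refine ⟨⟨fun u w => ⟨(key u w).choose⟩⟩, ?_⟩
  obtain ⟨u, w, h⟩ := (clexSym m (l + 1)).exists_dist_eq_diam
  obtain ⟨p, hp⟩ := key u w
  have := SimpleGraph.dist_le p
  omega
end

section
/- For all integers m ≥ 2 and l ≥ 1 and all vertices u, w of the CLEX graph C(m,l), there exists a walk from u to w that traverses level-1 edges in either direction and each level-t edge with t ≥ 2 only from its source to its target, and that uses at most one edge of each level t ∈ {1,…,l}; in particular, this walk has length at most l. -/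
/-- An admissible step along a level-`t` edge: level-1 (`t = 0`) edges may be
traversed in either direction, while level-`t` edges with `t ≥ 2` may only be
traversed from their source to their target. -/
def clexStep (m l : ℕ) (t : Fin l) (u w : Fin l → Fin m) : Prop :=
  clexEdge m l t u w ∨ ((t : ℕ) = 0 ∧ clexEdge m l t w u)

/-- The vertex reached after the levels `0, …, i - 1`: coordinates before `i - 1` agree with `w`,
coordinate `i - 1` is the carried value `a`, and the remaining ones agree with `u`. -/
def clexVertex {m l : ℕ} (a : Fin m) (u w : Fin l → Fin m) (i : ℕ) : Fin l → Fin m :=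
  fun k => if (k : ℕ) + 1 < i then w k else if (k : ℕ) + 1 = i then a else u k

theorem clexVertex_zero {m l : ℕ} (a : Fin m) (u w : Fin l → Fin m) :
    clexVertex a u w 0 = u := by
  funext k
  simp [clexVertex]

theorem clexVertex_one {m l : ℕ} (u w : Fin l → Fin m) (hl : 0 < l) :
    clexVertex (u ⟨0, hl⟩) u w 1 = u := by
  funext k
  by_cases hk : (k : ℕ) = 0
  · have hk' : k = ⟨0, hl⟩ := Fin.ext hk
    subst hk'
    simp [clexVertex]
  · simp [clexVertex, hk]

theorem clexVertex_last {m l : ℕ} (u w : Fin l → Fin m) (hl : l - 1 < l) :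
    clexVertex (w ⟨l - 1, hl⟩) u w l = w := by
  funext k
  by_cases hk : (k : ℕ) + 1 = l
  · have hk' : k = ⟨l - 1, hl⟩ := Fin.ext (by simp only; omega)
    simp [clexVertex, hk, ← hk']
  · have : (k : ℕ) + 1 < l := by have := k.isLt; omega
    simp [clexVertex, this]

/-- Consecutive vertices are joined by the level-`t` edge, except that for `t = 0` the value `a`
must differ from the current coordinate `0`. -/
theorem clexStep_clexVertex {m l : ℕ} (a : Fin m) (u w : Fin l → Fin m) (t : Fin l)
    (h : (t : ℕ) = 0 → u t ≠ a) :
    clexStep m l t (clexVertex a u w t) (clexVertex a u w (t + 1)) := by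
  left
  unfold clexEdge clexVertex
  by_cases ht : (t : ℕ) = 0
  · rw [if_pos ht]
    refine ⟨by simpa [ht] using h ht, fun k hk => ?_⟩
    have : (k : ℕ) ≠ 0 := fun hk' => hk (Fin.ext (hk'.trans ht.symm))
    simp [ht, this]
  · rw [if_neg ht]
    refine ⟨?_, fun k hk hkt => ?_⟩
    · have : (t : ℕ) - 1 + 1 = t := by omega
      simp [this]
    · have hkt' : (k : ℕ) ≠ t := fun h' => hkt (Fin.ext h')
      by_cases hlt : (k : ℕ) + 1 < t
      · have : (k : ℕ) < t := by omega
        simp [hlt, this]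
      · have h1 : ¬ (k : ℕ) < t := by omega
        have h2 : (k : ℕ) + 1 ≠ t := by omega
        simp [hlt, h1, h2, hkt']

/-- For any two vertices `u, w` of `C(m,l)` there is a walk from `u` to `w` that
respects edge directions (level-1 edges both ways, higher-level edges only
forward) and uses at most one edge of each level; in particular its length is at
most `l`. The walk is given by the list `ts` of levels of its successive edges
(`ts.Nodup` expressing that each level is used at most once) together with the
sequence `f` of vertices it visits. -/
theorem clex_walk_one_edge_per_level (m l : ℕ) (hm : 2 ≤ m) (hl : 1 ≤ l)
    (u w : Fin l → Fin m) :
    ∃ (ts : List (Fin l)) (f : ℕ → Fin l → Fin m),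
      ts.Nodup ∧ f 0 = u ∧ f ts.length = w ∧
      (∀ (i : ℕ) (hi : i < ts.length),
        clexStep m l (ts.get ⟨i, hi⟩) (f i) (f (i + 1))) ∧
      ts.length ≤ l := by
  have hlast : l - 1 < l := by omega
  by_cases h0 : u ⟨0, hl⟩ = w ⟨l - 1, hlast⟩
  · refine ⟨(List.finRange l).tail, fun i => clexVertex (w ⟨l - 1, hlast⟩) u w (i + 1),
      (List.nodup_finRange l).tail, ?_, ?_, ?_, by simp⟩
    · simpa only [h0] using clexVertex_one u w hl
    · simpa [Nat.sub_add_cancel hl] using clexVertex_last u w hlast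
    · intro i hi
      have hi' : i + 1 < l := by
        simp only [List.length_tail, List.length_finRange] at hi
        omega
      simpa using clexStep_clexVertex (w ⟨l - 1, hlast⟩) u w ⟨i + 1, hi'⟩ (by simp)
  · refine ⟨List.finRange l, clexVertex (w ⟨l - 1, hlast⟩) u w,
      List.nodup_finRange l, clexVertex_zero _ u w, ?_, ?_, by simp⟩
    · simpa using clexVertex_last u w hlast
    · intro i hi
      have hi' : i < l := by simpa using hi
      have := clexStep_clexVertex (w ⟨l - 1, hlast⟩) u w ⟨i, hi'⟩ (by
        rintro (rfl : i = 0)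
        exact h0)
      simpa using this
end

section
/- For all integers m ≥ 2 and l ≥ 1, every vertex u of the CLEX graph C(m,l) has exactly m − 1 level-1 neighbors, and for every t ∈ {2,…,l} exactly m level-t edges have source u and exactly m level-t edges have target u. In particular, the number of level-1 edges incident to u plus the number of level-t edges (2 ≤ t ≤ l) with source u equals l·m − 1, so the CLEX graph has uniform (out-)degree l·m − 1, i.e., degrees increase by exactly m per level. -/
/-- Functions agreeing with `f` away from `p`, with value at `p` constrained by `Q`, are counted
by the values satisfying `Q`. -/
theorem card_free_coord {ι α : Type*} [DecidableEq ι] (P : (ι → α) → Prop) (p : ι) (f : ι → α)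
    (Q : α → Prop) (h : ∀ w, P w ↔ Q (w p) ∧ ∀ k, k ≠ p → w k = f k) :
    Nat.card {w // P w} = Nat.card {j // Q j} := by
  refine Nat.card_congr
    { toFun := fun w => ⟨w.1 p, ((h _).1 w.2).1⟩
      invFun := fun j => ⟨Function.update f p j.1, (h _).2 ⟨by simpa using j.2, ?_⟩⟩
      left_inv := ?_
      right_inv := ?_ }
  · intro k hk
    simp [hk]
  · rintro ⟨w, hw⟩
    ext k
    by_cases hk : k = p
    · subst hk; simp
    · simp [hk, ((h w).1 hw).2 k hk]
  · rintro ⟨j, hj⟩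
    simp

theorem card_level_one (m l : ℕ) (u : Fin l → Fin m) (t : Fin l) (ht : (t : ℕ) = 0) :
    Nat.card {w : Fin l → Fin m // clexEdge m l t u w} = m - 1 := by
  rw [card_free_coord _ t u (fun j => j ≠ u t)]
  · simp [Nat.card_eq_fintype_card, Fintype.card_subtype_compl]
  · intro w
    simp only [clexEdge, ht, if_true, ne_comm, eq_comm]

/-- The target `w` must carry `u (t - 1)` at coordinate `t` and agree with `u` elsewhere, except at
the free coordinate `p = t - 1`. -/
theorem card_out (m l : ℕ) (u : Fin l → Fin m) (t : Fin l) (ht : 1 ≤ (t : ℕ)) :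
    Nat.card {w : Fin l → Fin m // clexEdge m l t u w} = m := by
  have h0 : (t : ℕ) ≠ 0 := by omega
  obtain ⟨p, hp⟩ : ∃ p : Fin l, p = ⟨(t : ℕ) - 1, by omega⟩ := ⟨_, rfl⟩
  have hpv : (t : ℕ) - 1 = p := by rw [hp]
  have htp : t ≠ p := by intro h; rw [← h] at hpv; omega
  rw [card_free_coord _ p (Function.update u t (u p)) (fun _ => True)]
  · simp
  · intro w
    simp only [clexEdge, h0, if_false, hpv, ne_eq, Fin.val_inj, true_and]
    constructor
    · rintro ⟨h1, h2⟩ k hk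
      by_cases hkt : k = t
      · subst hkt; simpa using h1
      · simpa [hkt] using h2 k hk hkt
    · intro h
      exact ⟨by simpa using h t htp, fun k hk hkt => by simpa [hkt] using h k hk⟩

/-- The source `v` must carry `u t` at coordinate `p = t - 1` and agree with `u` elsewhere, except
at the free coordinate `t`. -/
theorem card_in (m l : ℕ) (u : Fin l → Fin m) (t : Fin l) (ht : 1 ≤ (t : ℕ)) :
    Nat.card {v : Fin l → Fin m // clexEdge m l t v u} = m := by
  have h0 : (t : ℕ) ≠ 0 := by omega
  obtain ⟨p, hp⟩ : ∃ p : Fin l, p = ⟨(t : ℕ) - 1, by omega⟩ := ⟨_, rfl⟩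
  have hpv : (t : ℕ) - 1 = p := by rw [hp]
  have hpt : p ≠ t := by intro h; rw [h] at hpv; omega
  rw [card_free_coord _ t (Function.update u p (u t)) (fun _ => True)]
  · simp
  · intro v
    simp only [clexEdge, h0, if_false, hpv, ne_eq, Fin.val_inj, true_and]
    constructor
    · rintro ⟨h1, h2⟩ k hk
      by_cases hkp : k = p
      · subst hkp; simpa using h1.symm
      · simpa [hkp] using (h2 k hkp hk).symm
    · intro h
      exact ⟨by simpa using (h p hpt).symm,
        fun k hk hkt => by simpa [hk] using (h k hkt).symm⟩

/-- Every vertex `u` of `C(m,l)` has exactly `m − 1` level-1 neighbors, and for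
every level `t ≥ 2` (0-based: `1 ≤ t`) exactly `m` level-`t` edges have source `u`
and exactly `m` level-`t` edges have target `u`. In particular, the number of
level-1 edges incident to `u` plus the number of higher-level edges with source
`u` equals `l·m − 1`, i.e., the CLEX graph has uniform (out-)degree `l·m − 1`. -/
theorem clex_degrees (m l : ℕ) (hm : 2 ≤ m) (hl : 1 ≤ l) (u : Fin l → Fin m) :
    (∀ t : Fin l, (t : ℕ) = 0 →
      Nat.card {w : Fin l → Fin m // clexEdge m l t u w} = m - 1) ∧
    (∀ t : Fin l, 1 ≤ (t : ℕ) →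
      Nat.card {w : Fin l → Fin m // clexEdge m l t u w} = m ∧
      Nat.card {v : Fin l → Fin m // clexEdge m l t v u} = m) ∧
    Nat.card {w : Fin l → Fin m // clexEdge m l ⟨0, hl⟩ u w} +
      ∑ t ∈ Finset.univ.filter (fun t : Fin l => 1 ≤ (t : ℕ)),
        Nat.card {w : Fin l → Fin m // clexEdge m l t u w} = l * m - 1 := by
  refine ⟨card_level_one m l u, fun t ht => ⟨card_out m l u t ht, card_in m l u t ht⟩, ?_⟩
  rw [card_level_one m l u _ rfl,
    Finset.sum_congr rfl (fun t ht => card_out m l u t (Finset.mem_filter.1 ht).2),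
    Finset.sum_const, smul_eq_mul]
  obtain ⟨n, rfl⟩ : ∃ n, l = n + 1 := ⟨l - 1, by omega⟩
  have hc : (Finset.univ.filter (fun t : Fin (n + 1) => 1 ≤ (t : ℕ))).card = n := by
    have h : Finset.univ.filter (fun t : Fin (n + 1) => 1 ≤ (t : ℕ)) = Finset.univ.erase 0 := by
      ext t
      rw [Finset.mem_filter, Finset.mem_erase, Nat.one_le_iff_ne_zero, Ne, Ne, Fin.ext_iff,
        Fin.val_zero]
      simp only [Finset.mem_univ, true_and, and_true]
    rw [h, Finset.card_erase_of_mem (Finset.mem_univ _)]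
    simp
  rw [hc, Nat.add_mul]
  omega
end

section
/- Let k ≥ 4 be an even integer, and suppose that to each ordered pair (a,b) of distinct vertices of the three-dimensional torus T_k a walk P(a,b) from a to b in T_k is assigned. Then there exists an edge e of T_k such that the number of ordered pairs (a,b) whose walk P(a,b) traverses e is at least k^4/4. -/
/-!
Write `k = 2m` and cut the torus into the two slabs `(v 0).val < m` and `m ≤ (v 0).val`, each with
`m * k ^ 2` vertices. A walk between vertices on different sides traverses an edge with its ends
on different sides, and such an edge changes the zeroth coordinate either from `m - 1` to `m` or
from `-1` to `0`, so there are at most `2 * k ^ 2` of them (`exists_cutEdge_of_adj`). There are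
`2 * (m * k ^ 2) ^ 2 = 32 * m ^ 6` ordered pairs of vertices on different sides, so by the
pigeonhole principle some cut edge serves at least
`32 * m ^ 6 / (2 * k ^ 2) = 4 * m ^ 4 = k ^ 4 / 4` of them.
-/

/-- The three-dimensional torus on `(ℤ/kℤ)^3`: two vertices are adjacent iff they
differ in exactly one coordinate and, in that coordinate, they differ by `±1`. -/
def torus3 (k : ℕ) : SimpleGraph (Fin 3 → ZMod k) :=
  SimpleGraph.fromRel (fun u v => ∃ i : Fin 3, u i = v i + 1 ∧ ∀ j, j ≠ i → u j = v j)

/-- The slab of the torus where the zeroth coordinate has a representative in `{0, …, m - 1}`. -/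
def slab (k m : ℕ) : Set (Fin 3 → ZMod k) := {v | (v 0).val < m}

/-- The edges between `slab k m` and its complement, indexed by the layer that is crossed
(`true` for `-1 → 0`, `false` for `m - 1 → m`) and by the two remaining coordinates. -/
def cutEdge (k m : ℕ) (i : Bool × (Fin 2 → ZMod k)) : Sym2 (Fin 3 → ZMod k) :=
  s(Fin.cons (if i.1 then -1 else (m : ZMod k) - 1) i.2,
    Fin.cons ((if i.1 then -1 else (m : ZMod k) - 1) + 1) i.2)

lemma cutEdge_mem_edgeSet {k : ℕ} (hk : 4 ≤ k) (m : ℕ) (i : Bool × (Fin 2 → ZMod k)) :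
    cutEdge k m i ∈ (torus3 k).edgeSet := by
  have : Fact (1 < k) := ⟨by omega⟩
  rw [cutEdge, SimpleGraph.mem_edgeSet, torus3, SimpleGraph.fromRel_adj]
  refine ⟨fun h => ?_, Or.inr ⟨0, by simp, fun j hj => ?_⟩⟩
  · have := congrFun h 0
    simp at this
  · obtain ⟨j, rfl⟩ := Fin.exists_succ_eq.mpr hj
    simp

/-- A step `x → x + 1` in `ℤ/kℤ` enters or leaves the residues `{0, …, m - 1}` only at the two
places stated. -/
lemma eq_of_val_add_one {k m : ℕ} [NeZero k] (x : ZMod k) (h : x.val < m ↔ ¬ (x + 1).val < m) :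
    x = -1 ∨ x = (m : ZMod k) - 1 := by
  rcases Nat.lt_or_ge (x.val + 1) k with hx | hx
  · right
    have h1 : (x + 1).val = x.val + 1 := by
      have : Fact (1 < k) := ⟨by omega⟩
      rw [ZMod.val_add_of_lt, ZMod.val_one]
      rwa [ZMod.val_one]
    have h2 : x.val + 1 = m := by omega
    rw [← h2]
    simp
  · left
    have h2 : x.val + 1 = k := by have := ZMod.val_lt x; omega
    have h3 := congrArg (Nat.cast : ℕ → ZMod k) h2
    simp at h3
    exact eq_neg_of_add_eq_zero_left h3

lemma exists_cutEdge_of_rel {k m : ℕ} [NeZero k] {u v : Fin 3 → ZMod k}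
    (h : ∃ i : Fin 3, u i = v i + 1 ∧ ∀ j, j ≠ i → u j = v j)
    (hc : v ∈ slab k m ↔ u ∉ slab k m) : ∃ i, cutEdge k m i = s(u, v) := by
  obtain ⟨i, hi, hj⟩ := h
  change (v 0).val < m ↔ ¬ (u 0).val < m at hc
  -- Moving in another direction does not leave the slab.
  have hi0 : i = 0 := by
    by_contra hne
    rw [hj 0 (Ne.symm hne)] at hc
    tauto
  subst hi0
  rw [hi] at hc
  have hv : v = Fin.cons (v 0) (Fin.tail v) := (Fin.cons_self_tail v).symm
  have hu : u = Fin.cons (v 0 + 1) (Fin.tail v) := by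
    rw [← hi]
    refine (Fin.cons_self_tail u).symm.trans ?_
    congr 1
    funext j
    exact hj _ (Fin.succ_ne_zero j)
  rcases eq_of_val_add_one _ hc with h | h
  · refine ⟨(true, Fin.tail v), ?_⟩
    rw [Sym2.eq_swap, hu]
    rw [h] at hv
    conv_rhs => rw [hv]
    simp [cutEdge]
  · refine ⟨(false, Fin.tail v), ?_⟩
    rw [Sym2.eq_swap, hu]
    rw [h] at hv
    conv_rhs => rw [hv]
    simp [cutEdge]

lemma exists_cutEdge_of_adj {k m : ℕ} [NeZero k] {u v : Fin 3 → ZMod k}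
    (h : (torus3 k).Adj u v) (hc : v ∈ slab k m ↔ u ∉ slab k m) :
    ∃ i, cutEdge k m i = s(u, v) := by
  rw [torus3, SimpleGraph.fromRel_adj] at h
  rcases h.2 with h | h
  · exact exists_cutEdge_of_rel h hc
  · rw [Sym2.eq_swap]
    exact exists_cutEdge_of_rel h (by tauto)

lemma exists_cutEdge_mem_edges {k m : ℕ} [NeZero k] {a b : Fin 3 → ZMod k}
    (p : (torus3 k).Walk a b) (hc : b ∈ slab k m ↔ a ∉ slab k m) :
    ∃ i, cutEdge k m i ∈ p.edges := by
  have key : ∃ d ∈ p.darts, (d.snd ∈ slab k m ↔ d.fst ∉ slab k m) := by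
    by_cases ha : a ∈ slab k m
    · obtain ⟨d, hd, h1, h2⟩ := p.exists_boundary_dart (slab k m) ha (by tauto)
      exact ⟨d, hd, by tauto⟩
    · obtain ⟨d, hd, h1, h2⟩ := p.exists_boundary_dart (slab k m)ᶜ ha (by
        simp only [Set.mem_compl_iff]; tauto)
      simp only [Set.mem_compl_iff] at h1 h2
      exact ⟨d, hd, by tauto⟩
  obtain ⟨d, hd, h⟩ := key
  obtain ⟨i, hi⟩ := exists_cutEdge_of_adj d.adj h
  exact ⟨i, hi ▸ List.mem_map.mpr ⟨d, hd, rfl⟩⟩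

open Classical in
lemma card_slab {k m : ℕ} [NeZero k] (hm : m ≤ k) :
    (Finset.univ.filter (· ∈ slab k m)).card = m * k ^ 2 := by
  have h1 : (Finset.univ.filter fun x : ZMod k => x.val < m).card = m := by
    have : (Finset.univ.filter fun x : ZMod k => x.val < m)
        = (Finset.range m).image (Nat.cast : ℕ → ZMod k) := by
      ext x
      simp only [Finset.mem_filter, Finset.mem_univ, true_and, Finset.mem_image, Finset.mem_range]
      constructor
      · exact fun h => ⟨x.val, h, by simp⟩
      · rintro ⟨a, ha, rfl⟩
        rwa [ZMod.val_cast_of_lt (by omega)]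
    rw [this, Finset.card_image_of_injOn, Finset.card_range]
    intro a ha b hb hab
    simp only [Finset.coe_range, Set.mem_Iio] at ha hb
    have := congrArg ZMod.val hab
    rwa [ZMod.val_cast_of_lt (by omega), ZMod.val_cast_of_lt (by omega)] at this
  have h2 : (Finset.univ.filter (· ∈ slab k m)) = Fintype.piFinset (fun i : Fin 3 =>
      if i = 0 then (Finset.univ.filter fun x : ZMod k => x.val < m) else Finset.univ) := by
    ext v
    have hv : v ∈ slab k m ↔ (v 0).val < m := Iff.rfl
    simp [hv, Fintype.mem_piFinset, Fin.forall_fin_succ]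
  rw [h2, Fintype.card_piFinset]
  simp [Fin.prod_univ_succ, h1, ZMod.card]

/-- If to each ordered pair `(a,b)` of distinct vertices of the torus `T_k`
(`k ≥ 4` even) a walk `P a b` from `a` to `b` is assigned, then some edge is
traversed by the walks of at least `k^4/4` ordered pairs. -/
theorem torus_congestion (k : ℕ) (hk : 4 ≤ k) (hke : Even k)
    (P : ∀ a b : Fin 3 → ZMod k, a ≠ b → (torus3 k).Walk a b) :
    ∃ e ∈ (torus3 k).edgeSet,
      k ^ 4 / 4 ≤ Nat.card {p : (Fin 3 → ZMod k) × (Fin 3 → ZMod k) //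
        ∃ h : p.1 ≠ p.2, e ∈ (P p.1 p.2 h).edges} := by
  classical
  obtain ⟨m, hm⟩ := hke
  have : NeZero k := ⟨by omega⟩
  set A : Finset (Fin 3 → ZMod k) := Finset.univ.filter (· ∈ slab k m) with hA
  have hAcard : A.card = m * k ^ 2 := card_slab (by omega)
  have hAc : Aᶜ.card = m * k ^ 2 := by
    rw [Finset.card_compl, hAcard]
    simp only [Fintype.card_fun, ZMod.card, Fintype.card_fin]
    rw [Nat.sub_eq_iff_eq_add (by subst hm; nlinarith [Nat.zero_le (m ^ 3)])]
    subst hm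
    ring
  set S := A ×ˢ Aᶜ ∪ Aᶜ ×ˢ A with hS
  have hScard : S.card = 2 * (m * k ^ 2) ^ 2 := by
    rw [hS, Finset.card_union_of_disjoint, Finset.card_product, Finset.card_product, hAcard, hAc]
    · ring
    · rw [Finset.disjoint_left]
      simp only [Finset.mem_product, Finset.mem_compl]
      tauto
  have hex : ∀ p ∈ S, ∃ i, ∃ h : p.1 ≠ p.2, cutEdge k m i ∈ (P p.1 p.2 h).edges := by
    intro p hp
    have hc : p.2 ∈ slab k m ↔ p.1 ∉ slab k m := by
      simp only [hS, hA, Finset.mem_union, Finset.mem_product, Finset.mem_compl,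
        Finset.mem_filter, Finset.mem_univ, true_and] at hp
      tauto
    have hne : p.1 ≠ p.2 := fun h => by rw [h] at hc; tauto
    obtain ⟨i, hi⟩ := exists_cutEdge_mem_edges (P p.1 p.2 hne) hc
    exact ⟨i, hne, hi⟩
  choose! g hg using hex
  obtain ⟨i, -, hi⟩ := Finset.exists_le_card_fiber_of_mul_le_card_of_maps_to
    (s := S) (t := Finset.univ) (f := g) (n := k ^ 4 / 4) (fun _ _ => Finset.mem_univ _)
    Finset.univ_nonempty (by
      have h4 : k ^ 4 / 4 = 4 * m ^ 4 := by
        rw [hm, show (m + m) ^ 4 = 4 * (4 * m ^ 4) by ring]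
        exact Nat.mul_div_cancel_left _ (by norm_num)
      rw [hScard, h4]
      simp only [Finset.card_univ, Fintype.card_prod, Fintype.card_bool, Fintype.card_fun,
        ZMod.card, Fintype.card_fin]
      rw [hm]
      apply le_of_eq
      ring)
  refine ⟨cutEdge k m i, cutEdge_mem_edgeSet hk m i, hi.trans ?_⟩
  rw [Nat.card_eq_fintype_card, Fintype.card_subtype]
  apply Finset.card_le_card
  intro p hp
  rw [Finset.mem_filter] at hp
  rw [Finset.mem_filter]
  exact ⟨Finset.mem_univ _, hp.2 ▸ hg p hp.1⟩
end

section
/- Let G be a connected simple graph on n vertices with maximum degree at most Δ, where Δ ≥ 2 is an integer, and let h be a natural number with 2·Δ^{h+1} ≤ n. Then the sum of dist_G(u,v) over all ordered pairs (u,v) of vertices is at least n^2·(h+1)/2; equivalently, the average hop distance over ordered pairs of vertices is at least (h+1)/2. -/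
/-!
A ball of radius `k` in a graph of maximum degree at most `Δ ≥ 2` has fewer than `Δ ^ (k + 1)`
vertices (`card_ball_lt`). With `2 * Δ ^ (h + 1) ≤ n`, at least half of the vertices therefore lie
at distance at least `h + 1` from any given vertex `u`, so the distances from `u` sum to at least
`n * (h + 1) / 2`; summing over `u` gives the bound.
-/

/-- The ball of radius `k + 1` is covered by its centre and the neighbourhoods of the points of the
ball of radius `k`, so `1 + Δ * (Δ ^ (k + 1) - 1) < Δ ^ (k + 2)` drives the induction. -/
lemma card_ball_lt {V : Type*} [Fintype V] (G : SimpleGraph V) [DecidableRel G.Adj]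
    (hconn : G.Connected) (Δ : ℕ) (hΔ : 2 ≤ Δ) (hdeg : ∀ u, G.degree u ≤ Δ) (u : V) (k : ℕ) :
    (Finset.univ.filter fun v => G.dist v u ≤ k).card < Δ ^ (k + 1) := by
  classical
  induction k with
  | zero =>
    have h0 : (Finset.univ.filter fun v => G.dist v u ≤ 0) = {u} := by
      ext v
      simp [hconn.dist_eq_zero_iff]
    rw [h0]
    simp
    omega
  | succ k ih =>
    have hcover : (Finset.univ.filter fun v => G.dist v u ≤ k + 1) ⊆
        insert u ((Finset.univ.filter fun v => G.dist v u ≤ k).biUnion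
          fun w => G.neighborFinset w) := by
      intro v hv
      obtain ⟨p, hp⟩ := hconn.exists_walk_length_eq_dist v u
      have hv' : p.length ≤ k + 1 := hp ▸ (Finset.mem_filter.mp hv).2
      cases p with
      | nil => simp
      | @cons _ w _ hadj q =>
        refine Finset.mem_insert_of_mem (Finset.mem_biUnion.mpr ⟨w, ?_, ?_⟩)
        · exact Finset.mem_filter.mpr ⟨Finset.mem_univ _, (SimpleGraph.dist_le q).trans
            (by simpa using hv')⟩
        · simpa using hadj.symm
    have h1 := (Finset.card_le_card hcover).trans (Finset.card_insert_le _ _)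
    have h2 := Finset.card_biUnion_le_card_mul
      (Finset.univ.filter fun v => G.dist v u ≤ k) (fun w => G.neighborFinset w) Δ
      (fun w _ => by simpa using hdeg w)
    have h3 := Nat.mul_le_mul_right Δ (Nat.succ_le_of_lt ih)
    rw [pow_succ Δ (k + 1)]
    rw [Nat.succ_mul] at h3
    omega

/-- In a connected simple graph on `n` vertices with maximum degree at most
`Δ ≥ 2`, if `2·Δ^{h+1} ≤ n` then the sum of hop distances over all ordered pairs
of vertices is at least `n²·(h+1)/2` (stated multiplied out to avoid division),
i.e., the average hop distance over ordered pairs is at least `(h+1)/2`. -/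
theorem avg_dist_lower_bound {V : Type*} [Fintype V] (G : SimpleGraph V)
    [DecidableRel G.Adj] (hconn : G.Connected) (n Δ h : ℕ)
    (hn : Fintype.card V = n) (hΔ : 2 ≤ Δ) (hdeg : ∀ u, G.degree u ≤ Δ)
    (hh : 2 * Δ ^ (h + 1) ≤ n) :
    n ^ 2 * (h + 1) ≤ 2 * ∑ u : V, ∑ v : V, G.dist u v := by
  have key : ∀ u : V, n * (h + 1) ≤ 2 * ∑ v : V, G.dist u v := by
    intro u
    have hball := card_ball_lt G hconn Δ hΔ hdeg u h
    have hsplit := Finset.card_filter_add_card_filter_not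
      (s := (Finset.univ : Finset V)) (fun v => G.dist v u ≤ h)
    rw [Finset.card_univ, hn] at hsplit
    have hfar : (Finset.univ.filter fun v => ¬ G.dist v u ≤ h).card * (h + 1)
        ≤ ∑ v : V, G.dist u v := by
      refine le_trans ?_ (Finset.sum_le_sum_of_subset
        (Finset.filter_subset (fun v => ¬ G.dist v u ≤ h) Finset.univ))
      rw [← smul_eq_mul]
      refine Finset.card_nsmul_le_sum _ _ _ fun v hv => ?_
      rw [SimpleGraph.dist_comm]
      have := (Finset.mem_filter.mp hv).2
      omega
    calc n * (h + 1)
        ≤ 2 * (Finset.univ.filter fun v => ¬ G.dist v u ≤ h).card * (h + 1) :=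
          Nat.mul_le_mul_right _ (by omega)
      _ ≤ 2 * ∑ v : V, G.dist u v := by
          rw [mul_assoc]
          exact Nat.mul_le_mul_left 2 hfar
  calc n ^ 2 * (h + 1) = ∑ _u : V, n * (h + 1) := by
        rw [Finset.sum_const, Finset.card_univ, hn, smul_eq_mul]
        ring
    _ ≤ ∑ u : V, 2 * ∑ v : V, G.dist u v := Finset.sum_le_sum fun u _ => key u
    _ = 2 * ∑ u : V, ∑ v : V, G.dist u v := (Finset.mul_sum _ _ _).symm
end
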